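/- arXiv:0805.4179 — 6 statements merged into one kernel-verified Lean document; each statement's English description precedes it below -/
import Mathlib

section
/- Let σ ∈ {−1,1} and let m, σ_c, σ'_c, κ be real constants with σ_c ≠ 0 and σ'_c² = 1 − κσ_c². Let a, ȧ, ṫ be real numbers with a ≠ 0 and σ_c·a − 2m ≠ 0, and suppose that (i) ((σ_c·a − 2m)/(σ_c·a))·ṫ² − (σ_c·a/(σ_c·a − 2m))·σ_c²·ȧ² = a² and (ii) ṫ = σ·σ_c·σ'_c·a²/(σ_c·a − 2m). Then ȧ² + κ·a² = 2m·a/σ_c³. -/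
/-!
Since `σ ^ 2 = 1`, squaring `h2` eliminates the sign and gives `tdot ^ 2` in terms of `a`.
Substituting it into `h1` and clearing the nonzero denominator `σc * a - 2 * m` leaves a polynomial
identity; the curvature relation turns it into `a` times the Friedmann equation
multiplied by `σc ^ 3`, and both factors are nonzero.
-/

/-- Background Einstein–Straus matching implies the dust
Friedmann equation in conformal time. -/
theorem background_matching_implies_friedmann
    (σ m σc σc' κ a adot tdot : ℝ)
    (hσ : σ = -1 ∨ σ = 1)
    (hσc : σc ≠ 0)
    (hσc' : σc' ^ 2 = 1 - κ * σc ^ 2)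
    (ha : a ≠ 0)
    (hden : σc * a - 2 * m ≠ 0)
    (h1 : ((σc * a - 2 * m) / (σc * a)) * tdot ^ 2
        - ((σc * a) / (σc * a - 2 * m)) * σc ^ 2 * adot ^ 2 = a ^ 2)
    (h2 : tdot = σ * σc * σc' * a ^ 2 / (σc * a - 2 * m)) :
    adot ^ 2 + κ * a ^ 2 = 2 * m * a / σc ^ 3 := by
  have hσ2 : σ ^ 2 = 1 := by rcases hσ with rfl | rfl <;> norm_num
  have ht : tdot ^ 2 = σc ^ 2 * σc' ^ 2 * a ^ 4 / (σc * a - 2 * m) ^ 2 := by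
    rw [h2, div_pow]
    congr 1
    linear_combination σc ^ 2 * σc' ^ 2 * a ^ 4 * hσ2
  -- `h1` times `σc * a - 2 * m`, with the squared form of `h2` substituted for `tdot ^ 2`.
  have h3 : σc * σc' ^ 2 * a ^ 3 - σc ^ 3 * a * adot ^ 2 = a ^ 2 * (σc * a - 2 * m) := by
    rw [← h1, ht]
    generalize σc * a - 2 * m = D at hden
    field_simp
  have h4 : σc ^ 3 * (adot ^ 2 + κ * a ^ 2) = 2 * m * a := by
    apply mul_left_cancel₀ ha
    linear_combination -h3 + σc * a ^ 3 * hσc'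
  rw [eq_div_iff (pow_ne_zero 3 hσc)]
  linear_combination h4
end

section
/- Let σ ∈ {−1,1} and let m, σ_c, σ'_c, κ be real constants with σ_c ≠ 0 and σ'_c² = 1 − κσ_c². Let I ⊂ ℝ be an open interval and a : I → ℝ twice differentiable with a(λ) ≠ 0 and σ_c·a(λ) − 2m ≠ 0 for all λ ∈ I, satisfying the dust Friedmann equation ȧ² + κa² = 2m·a/σ_c³ and the dust acceleration equation ä + κa = m/σ_c³ on I. Define r₀(λ) = σ_c·a(λ) and let t₀ : I → ℝ be twice differentiable with ṫ₀ = σ·σ_c·σ'_c·a²/(σ_c·a − 2m) on I. Then for all λ ∈ I: −ṫ₀·r̈₀ + ẗ₀·ṙ₀ + 3m·ṙ₀²·ṫ₀/(r₀(r₀ − 2m)) − (m/r₀²)·(1 − 2m/r₀)·ṫ₀³ = 0. -/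
/-!
Write `D = σc a - 2m` and `C = σ σc σc'`, so that `ṫ₀ = C a² / D`. Differentiating on the open
interval gives `ẗ₀ = C a ȧ (σc a - 4m) / D²`. After substitution the left-hand side is
`C a / D²` times `-σc a ä D + σc ȧ² (σc a - m) - m σc'² a² / σc` (using `σ² = 1`), and this factor
vanishes identically once `ä`, `ȧ²` and `σc'²` are eliminated through the acceleration equation,
the Friedmann equation and `σc'² = 1 - κ σc²`.
-/

/-- Given the dust Friedmann and acceleration equations and the
trace matching condition for `ṫ₀`, the remaining background matching condition
`𝒦₋ = 𝒦₊ = 0` (with `r₀ = σc · a`) is automatically fulfilled. -/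
theorem background_matching_K_condition
    (σ m σc σc' κ p q : ℝ)
    (hσ : σ = -1 ∨ σ = 1)
    (hσc : σc ≠ 0)
    (hσc' : σc' ^ 2 = 1 - κ * σc ^ 2)
    (a a' a'' t₀ t' t'' : ℝ → ℝ)
    (hderiva : ∀ l ∈ Set.Ioo p q, HasDerivAt a (a' l) l)
    (hderiva' : ∀ l ∈ Set.Ioo p q, HasDerivAt a' (a'' l) l)
    (hane : ∀ l ∈ Set.Ioo p q, a l ≠ 0)
    (hden : ∀ l ∈ Set.Ioo p q, σc * a l - 2 * m ≠ 0)
    (hFried : ∀ l ∈ Set.Ioo p q, (a' l) ^ 2 + κ * (a l) ^ 2 = 2 * m * a l / σc ^ 3)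
    (hAcc : ∀ l ∈ Set.Ioo p q, a'' l + κ * a l = m / σc ^ 3)
    (hderivt : ∀ l ∈ Set.Ioo p q, HasDerivAt t₀ (t' l) l)
    (hderivt' : ∀ l ∈ Set.Ioo p q, HasDerivAt t' (t'' l) l)
    (htval : ∀ l ∈ Set.Ioo p q, t' l = σ * σc * σc' * (a l) ^ 2 / (σc * a l - 2 * m)) :
    ∀ l ∈ Set.Ioo p q,
      - t' l * (σc * a'' l) + t'' l * (σc * a' l)
        + 3 * m * (σc * a' l) ^ 2 * t' l / ((σc * a l) * (σc * a l - 2 * m))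
        - (m / (σc * a l) ^ 2) * (1 - 2 * m / (σc * a l)) * (t' l) ^ 3 = 0 := by
  intro l hl
  have hs2 : σ ^ 2 = 1 := by rcases hσ with h | h <;> rw [h] <;> norm_num
  have ha := hane l hl
  have hD := hden l hl
  have ht'' : t'' l = σ * σc * σc' * (a l * a' l * (σc * a l - 4 * m))
      / (σc * a l - 2 * m) ^ 2 := by
    have h1 : HasDerivAt (fun x => σ * σc * σc' * (a x) ^ 2 / (σc * a x - 2 * m)) _ l :=
      (((hderiva l hl).pow 2).const_mul (σ * σc * σc')).div
        (((hderiva l hl).const_mul σc).sub_const (2 * m)) hD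
    -- The formula for `t'` holds on a neighbourhood of `l`, so it may be differentiated there.
    have h2 : t' =ᶠ[nhds l] fun x => σ * σc * σc' * (a x) ^ 2 / (σc * a x - 2 * m) :=
      Filter.eventually_of_mem (isOpen_Ioo.mem_nhds hl) htval
    rw [(hderivt' l hl).unique (h1.congr_of_eventuallyEq h2)]
    congr 1
    simp
    ring
  have hF : a' l ^ 2 = 2 * m * a l / σc ^ 3 - κ * a l ^ 2 := by linarith [hFried l hl]
  have hA : a'' l = m / σc ^ 3 - κ * a l := by linarith [hAcc l hl]
  have key : -(σc * a l * a'' l * (σc * a l - 2 * m)) + σc * a' l ^ 2 * (σc * a l - m)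
      - m * σc' ^ 2 * a l ^ 2 / σc = 0 := by
    rw [hF, hA, hσc']
    field_simp
    ring
  have hfactor : - t' l * (σc * a'' l) + t'' l * (σc * a' l)
        + 3 * m * (σc * a' l) ^ 2 * t' l / ((σc * a l) * (σc * a l - 2 * m))
        - (m / (σc * a l) ^ 2) * (1 - 2 * m / (σc * a l)) * (t' l) ^ 3
      = σ * σc * σc' * a l / (σc * a l - 2 * m) ^ 2 *
        (-(σc * a l * a'' l * (σc * a l - 2 * m)) + σc * a' l ^ 2 * (σc * a l - m)
          - m * σc' ^ 2 * a l ^ 2 / σc) := by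
    have hs3 : σ ^ 3 = σ := by rw [pow_succ, hs2, one_mul]
    have hcube : (t' l) ^ 3
        = σ * (σc * σc' * a l ^ 2) ^ 3 / (σc * a l - 2 * m) ^ 3 := by
      rw [htval l hl, div_pow]
      congr 1
      linear_combination (σc * σc' * a l ^ 2) ^ 3 * hs3
    have hlapse : 1 - 2 * m / (σc * a l) = (σc * a l - 2 * m) / (σc * a l) := by
      field_simp
    rw [hcube, hlapse, htval l hl, ht'']
    -- Keeping the denominator atomic lets `field_simp` clear it.
    obtain ⟨D, hDe⟩ : ∃ D, D = σc * a l - 2 * m := ⟨_, rfl⟩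
    rw [← hDe] at hD ⊢
    field_simp
    rw [hDe]
    ring
  rw [hfactor, key, mul_zero]
end

section
/- Let σ ∈ {−1,1} and let m, σ_c, σ'_c, κ be real constants with σ_c ≠ 0 and σ'_c² = 1 − κσ_c². Let a, ȧ be real numbers with a ≠ 0 and σ_c·a − 2m ≠ 0, satisfying the dust Friedmann equation ȧ² + κa² = 2m·a/σ_c³. Define ṫ = σ·σ_c·σ'_c·a²/(σ_c·a − 2m) and ṙ = σ_c·ȧ. Then ((σ_c·a − 2m)/(σ_c·a))·ṫ² − (σ_c·a/(σ_c·a − 2m))·ṙ² = a². -/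
/-!
Since `σ² = 1`, the choice of `ṫ` gives `ṫ² (σc a - 2m)² = σc² (1 - κ σc²) a⁴`. Over the common
denominator `σc a (σc a - 2m)` the lapse condition is then a polynomial identity, in which the
Friedmann equation, cleared of denominators, replaces `σc³ ȧ²` by `2 m a - κ σc³ a²`.
-/

/-- Converse (sufficiency) part of the background Einstein–Straus
matching: the Friedmann equation and the trace matching choice of `ṫ` imply the
lapse condition `N₋² = a²`. -/
theorem friedmann_implies_lapse_matching
    (σ m σc σc' κ a adot : ℝ)
    (hσ : σ = -1 ∨ σ = 1)
    (hσc : σc ≠ 0)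
    (hσc' : σc' ^ 2 = 1 - κ * σc ^ 2)
    (ha : a ≠ 0)
    (hden : σc * a - 2 * m ≠ 0)
    (hFried : adot ^ 2 + κ * a ^ 2 = 2 * m * a / σc ^ 3)
    (tdot rdot : ℝ)
    (htdot : tdot = σ * σc * σc' * a ^ 2 / (σc * a - 2 * m))
    (hrdot : rdot = σc * adot) :
    ((σc * a - 2 * m) / (σc * a)) * tdot ^ 2
      - ((σc * a) / (σc * a - 2 * m)) * rdot ^ 2 = a ^ 2 := by
  have hs : σ ^ 2 = 1 := by rcases hσ with h | h <;> simp [h]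
  have hF : σc ^ 3 * (adot ^ 2 + κ * a ^ 2) = 2 * m * a := by
    rw [hFried]
    field_simp
  subst hrdot
  have ht : tdot * (σc * a - 2 * m) = σ * σc * σc' * a ^ 2 := by
    rw [htdot, div_mul_cancel₀ _ hden]
  have ht2 : tdot ^ 2 * (σc * a - 2 * m) ^ 2 = σc ^ 2 * (1 - κ * σc ^ 2) * a ^ 4 := by
    rw [← mul_pow, ht, ← hσc']
    linear_combination σc ^ 2 * σc' ^ 2 * a ^ 4 * hs
  rw [div_mul_eq_mul_div, div_mul_eq_mul_div, div_sub_div _ _ (mul_ne_zero hσc ha) hden,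
    div_eq_iff (mul_ne_zero (mul_ne_zero hσc ha) hden)]
  linear_combination ht2 - σc * a ^ 2 * hF
end

section
/- Let m ∈ ℝ and let Ω ⊂ ℝ² be open with sinθ ≠ 0 and D(r,θ) := (r − m)² − m²cos²θ ≠ 0 for all (r,θ) ∈ Ω. Let U : Ω → ℝ be twice continuously differentiable and satisfy the equation r(r − 2m)·∂²U/∂r² + (cosθ/sinθ)·∂U/∂θ + ∂²U/∂θ² + 2(r − m)·∂U/∂r = 0 on Ω. Define f(r,θ) = (2m sinθ/D)·[(r − m)sinθ·∂U/∂r + cosθ·∂U/∂θ] and g(r,θ) = (2m sinθ/D)·[−r(r − 2m)cosθ·∂U/∂r + (r − m)sinθ·∂U/∂θ]. Then ∂f/∂θ = ∂g/∂r on Ω. -/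
/-!
Write `ρ = r - m`, `Δ = r (r - 2m)`, `s = sin θ`, `c = cos θ`, so that `D = ρ² - m² c² = Δ + m² s²`.
In `∂f/∂θ - ∂g/∂r` the mixed second derivatives of `U` cancel by symmetry, leaving
`(2m s c / D) (Δ U_rr + U_θθ)`. The first-order terms add up, using the two expressions for `D`
and `s² + c² = 1`, to `(2m s c / D) (2 ρ U_r + (c / s) U_θ)`, so the difference is
`2m s c / D` times the left-hand side of the equation for `U`.

The partial derivatives are computed along coordinate lines (`hasDerivAt_pdr`, `hasDerivAt_pdθ`),
and the symmetry of mixed partials is `pdθ_pdr_eq_pdr_pdθ`.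
-/

/-- Partial derivative with respect to the first (radial) coordinate. -/
noncomputable def pdr (F : ℝ × ℝ → ℝ) (p : ℝ × ℝ) : ℝ := fderiv ℝ F p (1, 0)

/-- Partial derivative with respect to the second (angular) coordinate. -/
noncomputable def pdθ (F : ℝ × ℝ → ℝ) (p : ℝ × ℝ) : ℝ := fderiv ℝ F p (0, 1)

lemma hasDerivAt_pdr {F : ℝ × ℝ → ℝ} {p : ℝ × ℝ} (hF : DifferentiableAt ℝ F p) :
    HasDerivAt (fun t => F (t, p.2)) (pdr F p) p.1 :=
  HasFDerivAt.comp_hasDerivAt (f := fun t : ℝ => (t, p.2)) p.1 hF.hasFDerivAt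
    ((hasDerivAt_id p.1).prodMk (hasDerivAt_const p.1 p.2))

lemma hasDerivAt_pdθ {F : ℝ × ℝ → ℝ} {p : ℝ × ℝ} (hF : DifferentiableAt ℝ F p) :
    HasDerivAt (fun t => F (p.1, t)) (pdθ F p) p.2 :=
  HasFDerivAt.comp_hasDerivAt (f := fun t : ℝ => (p.1, t)) p.2 hF.hasFDerivAt
    ((hasDerivAt_const p.2 p.1).prodMk (hasDerivAt_id p.2))

lemma differentiableAt_fderiv_of_contDiffAt_two {U : ℝ × ℝ → ℝ} {p : ℝ × ℝ}
    (hU : ContDiffAt ℝ 2 U p) : DifferentiableAt ℝ (fderiv ℝ U) p :=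
  (hU.fderiv_right (m := 1) (by norm_num)).differentiableAt (by norm_num)

lemma differentiableAt_pdr {U : ℝ × ℝ → ℝ} {p : ℝ × ℝ} (hU : ContDiffAt ℝ 2 U p) :
    DifferentiableAt ℝ (pdr U) p :=
  (differentiableAt_fderiv_of_contDiffAt_two hU).clm_apply (differentiableAt_const _)

lemma differentiableAt_pdθ {U : ℝ × ℝ → ℝ} {p : ℝ × ℝ} (hU : ContDiffAt ℝ 2 U p) :
    DifferentiableAt ℝ (pdθ U) p :=
  (differentiableAt_fderiv_of_contDiffAt_two hU).clm_apply (differentiableAt_const _)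

lemma pdθ_pdr_eq_pdr_pdθ {U : ℝ × ℝ → ℝ} {p : ℝ × ℝ} (hU : ContDiffAt ℝ 2 U p) :
    pdθ (pdr U) p = pdr (pdθ U) p := by
  have hd := differentiableAt_fderiv_of_contDiffAt_two hU
  have key : ∀ v w : ℝ × ℝ,
      fderiv ℝ (fun x => fderiv ℝ U x v) p w = fderiv ℝ (fderiv ℝ U) p w v := by
    intro v w
    rw [fderiv_clm_apply hd (differentiableAt_const v)]
    simp
  have hsymm : IsSymmSndFDerivAt ℝ U p := hU.isSymmSndFDerivAt (by simp)
  exact (key _ _).trans ((hsymm.eq _ _).trans (key _ _).symm)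

/-- Integrability of the first-order system determining `k⁽¹⁾`:
if `U` satisfies the perturbed vacuum PDE, then `∂f/∂θ = ∂g/∂r` for the
right-hand sides `f`, `g` of the system. -/
theorem k_system_integrability
    (m : ℝ) (Ω : Set (ℝ × ℝ)) (hΩ : IsOpen Ω)
    (hsin : ∀ p ∈ Ω, Real.sin p.2 ≠ 0)
    (hD : ∀ p ∈ Ω, (p.1 - m) ^ 2 - m ^ 2 * Real.cos p.2 ^ 2 ≠ 0)
    (U : ℝ × ℝ → ℝ) (hU : ContDiffOn ℝ 2 U Ω)
    (hpde : ∀ p ∈ Ω,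
      p.1 * (p.1 - 2 * m) * pdr (pdr U) p + (Real.cos p.2 / Real.sin p.2) * pdθ U p
        + pdθ (pdθ U) p + 2 * (p.1 - m) * pdr U p = 0) :
    ∀ p ∈ Ω,
      pdθ (fun x => (2 * m * Real.sin x.2 / ((x.1 - m) ^ 2 - m ^ 2 * Real.cos x.2 ^ 2))
        * ((x.1 - m) * Real.sin x.2 * pdr U x + Real.cos x.2 * pdθ U x)) p
      = pdr (fun x => (2 * m * Real.sin x.2 / ((x.1 - m) ^ 2 - m ^ 2 * Real.cos x.2 ^ 2))
        * (-(x.1 * (x.1 - 2 * m)) * Real.cos x.2 * pdr U x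
            + (x.1 - m) * Real.sin x.2 * pdθ U x)) p := by
  intro p hp
  have hUp : ContDiffAt ℝ 2 U p := hU.contDiffAt (hΩ.mem_nhds hp)
  have hA := differentiableAt_pdr hUp
  have hB := differentiableAt_pdθ hUp
  have hDp := hD p hp
  have hsp := hsin p hp
  have hcoef : DifferentiableAt ℝ (fun x : ℝ × ℝ =>
      2 * m * Real.sin x.2 / ((x.1 - m) ^ 2 - m ^ 2 * Real.cos x.2 ^ 2)) p := by
    fun_prop (disch := exact hDp)
  have hf := hasDerivAt_pdθ (hcoef.mul
    (show DifferentiableAt ℝ (fun x : ℝ × ℝ =>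
      (x.1 - m) * Real.sin x.2 * pdr U x + Real.cos x.2 * pdθ U x) p by fun_prop))
  have hg := hasDerivAt_pdr (hcoef.mul
    (show DifferentiableAt ℝ (fun x : ℝ × ℝ => -(x.1 * (x.1 - 2 * m)) * Real.cos x.2 * pdr U x
      + (x.1 - m) * Real.sin x.2 * pdθ U x) p by fun_prop))
  have hs := Real.hasDerivAt_sin p.2
  have hc := Real.hasDerivAt_cos p.2
  have hid := hasDerivAt_id' p.1
  have hf' := ((hs.const_mul (2 * m)).div
      (((hc.pow 2).const_mul (m ^ 2)).const_sub ((p.1 - m) ^ 2)) hDp).mul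
    (((hs.const_mul (p.1 - m)).mul (hasDerivAt_pdθ hA)).add (hc.mul (hasDerivAt_pdθ hB)))
  have hg' := ((hasDerivAt_const p.1 (2 * m * Real.sin p.2)).div
      (((hid.sub_const m).pow 2).sub_const (m ^ 2 * Real.cos p.2 ^ 2)) hDp).mul
    ((((hid.mul (hid.sub_const (2 * m))).neg.mul_const (Real.cos p.2)).mul
        (hasDerivAt_pdr hA)).add
      (((hid.sub_const m).mul_const (Real.sin p.2)).mul (hasDerivAt_pdr hB)))
  refine (hf.unique hf').trans (Eq.trans ?_ (hg.unique hg').symm)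
  have hpd := hpde p hp
  simp only [Pi.mul_apply, Pi.add_apply, Pi.neg_apply, Pi.pow_apply, Pi.div_apply,
    Nat.cast_ofNat, Nat.add_one_sub_one, pow_one]
  rw [pdθ_pdr_eq_pdr_pdθ hUp]
  have hcs := Real.sin_sq_add_cos_sq p.2
  generalize pdr (pdr U) p = Urr at *
  generalize pdr (pdθ U) p = Urθ at *
  generalize pdθ (pdθ U) p = Uθθ at *
  generalize pdr U p = Ur at *
  generalize pdθ U p = Uθ at *
  generalize Real.sin p.2 = s at *
  generalize Real.cos p.2 = c at *
  generalize p.1 = r at *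
  have hUθθ : Uθθ = -(r * (r - 2 * m) * Urr + c / s * Uθ + 2 * (r - m) * Ur) := by linarith
  subst hUθθ
  -- The only use of `s² + c² = 1` is `Δ + m² s² = D`, in the coefficient of `U_r`.
  field_simp
  linear_combination (-4 * m ^ 3 * (r - m) * s * c * Ur) * hcs
end

section
/- Let S² = {x ∈ ℝ³ : |x| = 1} and let V : ℝ³ → ℝ³ be a smooth map with ⟨V(x), x⟩ = 0 for all x ∈ S². Suppose there exists a function μ : S² → ℝ such that for every x ∈ S² and all u, w ∈ ℝ³ with ⟨x,u⟩ = ⟨x,w⟩ = 0, the derivative DV(x) of V at x satisfies ⟨DV(x)(u), w⟩ + ⟨DV(x)(w), u⟩ = 2μ(x)⟨u,w⟩. Then there exist vectors a, c ∈ ℝ³ such that V(x) = a × x + c − ⟨c,x⟩·x for all x ∈ S². -/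
/-!
Read through stereographic projection from the north pole, `V` becomes a vector field
`f ∂_z` on `ℂ`. The conformal Killing condition is exactly the Cauchy–Riemann equation for `f`
(`stereoField_differentiable`), so `f` is entire. The stereographic chart scales lengths by
`2 / (1 + |z|²)`, hence `|f z| = (1 + |z|²) |V| / 2 ≤ M (1 + |z|²)` because `V` is bounded on the
compact sphere (`stereoField_bound`). Cauchy's estimates then force `f` to be a polynomial
`α + β z + γ z²` (`entire_quadratic`). These three complex coefficients are the six real parameters
of the fields `a × x + c - ⟨c, x⟩ x`, which settles the claim away from the north pole
(`eq_of_quadratic`); continuity along a meridian gives it at the pole.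
-/

open Complex Filter Topology

namespace ConformalKilling

/-! ### The stereographic chart -/

/-- The inverse of stereographic projection from the north pole `(0, 0, 1)`. -/
noncomputable def stereoInv (x y : ℝ) : Fin 3 → ℝ :=
  ![2 * x / (1 + x ^ 2 + y ^ 2), 2 * y / (1 + x ^ 2 + y ^ 2),
    (x ^ 2 + y ^ 2 - 1) / (1 + x ^ 2 + y ^ 2)]

/-- The derivative of `stereoInv` in its first variable. -/
noncomputable def stereoInvX (x y : ℝ) : Fin 3 → ℝ :=
  ![2 * (1 + y ^ 2 - x ^ 2) / (1 + x ^ 2 + y ^ 2) ^ 2, -(4 * x * y) / (1 + x ^ 2 + y ^ 2) ^ 2,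
    4 * x / (1 + x ^ 2 + y ^ 2) ^ 2]

/-- The derivative of `stereoInv` in its second variable. -/
noncomputable def stereoInvY (x y : ℝ) : Fin 3 → ℝ :=
  ![-(4 * x * y) / (1 + x ^ 2 + y ^ 2) ^ 2, 2 * (1 + x ^ 2 - y ^ 2) / (1 + x ^ 2 + y ^ 2) ^ 2,
    4 * y / (1 + x ^ 2 + y ^ 2) ^ 2]

lemma denom_ne (x y : ℝ) : 1 + x ^ 2 + y ^ 2 ≠ 0 := by positivity

lemma stereoInv_mem (x y : ℝ) : ∑ i, stereoInv x y i ^ 2 = 1 := by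
  have := denom_ne x y
  simp [Fin.sum_univ_three, stereoInv]
  field_simp
  ring

lemma hasDerivAt_stereoInv_fst (x y : ℝ) :
    HasDerivAt (fun s => stereoInv s y) (stereoInvX x y) x := by
  have hD := denom_ne x y
  have h2 : HasDerivAt (fun s : ℝ => s ^ 2) (2 * x) x := by simpa using hasDerivAt_pow 2 x
  have hd : HasDerivAt (fun s : ℝ => 1 + s ^ 2 + y ^ 2) (2 * x) x :=
    (h2.const_add 1).add_const _
  have hn : HasDerivAt (fun s : ℝ => s ^ 2 + y ^ 2 - 1) (2 * x) x :=
    (h2.add_const _).sub_const _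
  have hx : HasDerivAt (fun s : ℝ => 2 * s) 2 x := by simpa using (hasDerivAt_id x).const_mul 2
  rw [hasDerivAt_pi]
  intro i
  fin_cases i
  · refine (hx.div hd hD).congr_deriv ?_
    simp only [stereoInvX]
    simp
    ring
  · refine ((hasDerivAt_const x (2 * y)).div hd hD).congr_deriv ?_
    simp only [stereoInvX]
    simp
    ring
  · refine (hn.div hd hD).congr_deriv ?_
    simp only [stereoInvX]
    simp
    ring

lemma hasDerivAt_stereoInv_snd (x y : ℝ) :
    HasDerivAt (fun s => stereoInv x s) (stereoInvY x y) y := by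
  have hD := denom_ne x y
  have h2 : HasDerivAt (fun s : ℝ => s ^ 2) (2 * y) y := by simpa using hasDerivAt_pow 2 y
  have hd : HasDerivAt (fun s : ℝ => 1 + x ^ 2 + s ^ 2) (2 * y) y := h2.const_add _
  have hn : HasDerivAt (fun s : ℝ => x ^ 2 + s ^ 2 - 1) (2 * y) y :=
    (h2.const_add _).sub_const _
  have hx : HasDerivAt (fun s : ℝ => 2 * s) 2 y := by simpa using (hasDerivAt_id y).const_mul 2
  rw [hasDerivAt_pi]
  intro i
  fin_cases i
  · refine ((hasDerivAt_const y (2 * x)).div hd hD).congr_deriv ?_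
    simp only [stereoInvY]
    simp
    ring
  · refine (hx.div hd hD).congr_deriv ?_
    simp only [stereoInvY]
    simp
    ring
  · refine (hn.div hd hD).congr_deriv ?_
    simp only [stereoInvY]
    simp
    ring

/-! ### The field in the chart: holomorphy and growth -/

/-- The first component of the field `V` in the stereographic chart. -/
noncomputable def compP (V : (Fin 3 → ℝ) → (Fin 3 → ℝ)) (x y : ℝ) : ℝ :=
  (1 + x ^ 2 + y ^ 2) / 2 * (V (stereoInv x y) 0 + x * V (stereoInv x y) 2)

/-- The second component of the field `V` in the stereographic chart. -/
noncomputable def compQ (V : (Fin 3 → ℝ) → (Fin 3 → ℝ)) (x y : ℝ) : ℝ :=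
  (1 + x ^ 2 + y ^ 2) / 2 * (V (stereoInv x y) 1 + y * V (stereoInv x y) 2)

/-- The field `V` in the stereographic chart, as a complex-valued function on `ℂ`. -/
noncomputable def stereoField (V : (Fin 3 → ℝ) → (Fin 3 → ℝ)) (z : ℂ) : ℂ :=
  (compP V z.re z.im : ℂ) + (compQ V z.re z.im : ℂ) * I

lemma stereoField_re (V : (Fin 3 → ℝ) → (Fin 3 → ℝ)) (z : ℂ) :
    (stereoField V z).re = compP V z.re z.im := by
  simp only [stereoField, add_re, mul_re, ofReal_re, ofReal_im, I_re, I_im]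
  ring

lemma stereoField_im (V : (Fin 3 → ℝ) → (Fin 3 → ℝ)) (z : ℂ) :
    (stereoField V z).im = compQ V z.re z.im := by
  simp only [stereoField, add_im, mul_im, ofReal_re, ofReal_im, I_re, I_im]
  ring

lemma stereoField_real_differentiable (V : (Fin 3 → ℝ) → (Fin 3 → ℝ))
    (hV : Differentiable ℝ V) : Differentiable ℝ (stereoField V) := by
  have hre : Differentiable ℝ (fun z : ℂ => z.re) := reCLM.differentiable
  have him : Differentiable ℝ (fun z : ℂ => z.im) := imCLM.differentiable
  have hs : Differentiable ℝ (fun z : ℂ => stereoInv z.re z.im) := by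
    rw [differentiable_pi]
    intro i
    have hD : ∀ z : ℂ, 1 + z.re ^ 2 + z.im ^ 2 ≠ 0 := fun z => denom_ne _ _
    have hDi : Differentiable ℝ (fun z : ℂ => (1 + z.re ^ 2 + z.im ^ 2)⁻¹) :=
      Differentiable.inv (((hre.pow 2).const_add 1).add (him.pow 2)) hD
    fin_cases i
    · exact (hre.const_mul 2).mul hDi
    · exact (him.const_mul 2).mul hDi
    · exact (((hre.pow 2).add (him.pow 2)).sub_const 1).mul hDi
  have hg : Differentiable ℝ (fun z : ℂ => V (stereoInv z.re z.im)) := hV.comp hs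
  have hgi : ∀ i, Differentiable ℝ (fun z : ℂ => V (stereoInv z.re z.im) i) :=
    differentiable_pi.1 hg
  have h0 := hgi 0
  have h1 := hgi 1
  have h2 := hgi 2
  have hP : Differentiable ℝ (fun z : ℂ => compP V z.re z.im) := by
    unfold compP; fun_prop
  have hQ : Differentiable ℝ (fun z : ℂ => compQ V z.re z.im) := by
    unfold compQ; fun_prop
  have hP' : Differentiable ℝ (fun z : ℂ => (compP V z.re z.im : ℂ)) :=
    ofRealCLM.differentiable.comp hP
  have hQ' : Differentiable ℝ (fun z : ℂ => (compQ V z.re z.im : ℂ)) :=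
    ofRealCLM.differentiable.comp hQ
  exact hP'.add (hQ'.mul_const I)

/-- The Cauchy–Riemann equations for `stereoField V`, from the conformal Killing equation and the
derivative of the tangency relation `⟨V, x⟩ = 0` in the two coordinate directions. -/
lemma stereoField_differentiable (V : (Fin 3 → ℝ) → (Fin 3 → ℝ)) (hV : Differentiable ℝ V)
    (htan : ∀ x : Fin 3 → ℝ, (∑ i, x i ^ 2) = 1 → (∑ i, V x i * x i) = 0)
    (μ : (Fin 3 → ℝ) → ℝ)
    (hconf : ∀ x : Fin 3 → ℝ, (∑ i, x i ^ 2) = 1 →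
      ∀ u w : Fin 3 → ℝ, (∑ i, x i * u i) = 0 → (∑ i, x i * w i) = 0 →
        (∑ i, (fderiv ℝ V x u) i * w i) + (∑ i, (fderiv ℝ V x w) i * u i)
          = 2 * μ x * (∑ i, u i * w i)) :
    Differentiable ℂ (stereoField V) := by
  intro z
  have hfz := stereoField_real_differentiable V hV z
  refine differentiableAt_complex_iff_differentiableAt_real.2 ⟨hfz, ?_⟩
  obtain ⟨x, y⟩ := z
  set L := fderiv ℝ V (stereoInv x y) with hL
  have hgx : HasDerivAt (fun s => V (stereoInv s y)) (L (stereoInvX x y)) x :=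
    (hV (stereoInv x y)).hasFDerivAt.comp_hasDerivAt x (hasDerivAt_stereoInv_fst x y)
  have hgy : HasDerivAt (fun s => V (stereoInv x s)) (L (stereoInvY x y)) y :=
    (hV (stereoInv x y)).hasFDerivAt.comp_hasDerivAt y (hasDerivAt_stereoInv_snd x y)
  have hD := denom_ne x y
  -- the coordinate vectors are tangent to the sphere, orthogonal and of equal length
  have tX : ∑ i, stereoInv x y i * stereoInvX x y i = 0 := by
    simp [Fin.sum_univ_three, stereoInv, stereoInvX]; field_simp; ring
  have tY : ∑ i, stereoInv x y i * stereoInvY x y i = 0 := by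
    simp [Fin.sum_univ_three, stereoInv, stereoInvY]; field_simp; ring
  have oXY : ∑ i, stereoInvX x y i * stereoInvY x y i = 0 := by
    simp [Fin.sum_univ_three, stereoInvX, stereoInvY]; field_simp; ring
  have nXY : ∑ i, stereoInvX x y i * stereoInvX x y i
      = ∑ i, stereoInvY x y i * stereoInvY x y i := by
    simp [Fin.sum_univ_three, stereoInvX, stereoInvY]; field_simp; ring
  have c1 := hconf _ (stereoInv_mem x y) _ _ tX tX
  have c2 := hconf _ (stereoInv_mem x y) _ _ tY tY
  have c3 := hconf _ (stereoInv_mem x y) _ _ tX tY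
  rw [oXY, mul_zero] at c3
  rw [nXY, ← c2] at c1
  rw [← hL] at c1 c3
  have gx := hasDerivAt_pi.1 hgx
  have gy := hasDerivAt_pi.1 hgy
  generalize L (stereoInvX x y) = a at *
  generalize L (stereoInvY x y) = b at *
  have T : ∀ x y, 2 * x * V (stereoInv x y) 0 + 2 * y * V (stereoInv x y) 1
      + (x ^ 2 + y ^ 2 - 1) * V (stereoInv x y) 2 = 0 := by
    intro x y
    have h := htan _ (stereoInv_mem x y)
    have hD := denom_ne x y
    generalize V (stereoInv x y) = v at *
    simp [Fin.sum_univ_three, stereoInv] at h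
    field_simp at h
    linear_combination h
  have hx1 : HasDerivAt (fun s : ℝ => s) 1 x := hasDerivAt_id x
  have hy1 : HasDerivAt (fun s : ℝ => s) 1 y := hasDerivAt_id y
  have hx2 : HasDerivAt (fun s : ℝ => s ^ 2) (2 * x) x := by simpa using hasDerivAt_pow 2 x
  have hy2 : HasDerivAt (fun s : ℝ => s ^ 2) (2 * y) y := by simpa using hasDerivAt_pow 2 y
  have Tx := ((((hx1.const_mul 2).mul (gx 0)).add ((gx 1).const_mul (2 * y))).add
    (((hx2.add_const (y ^ 2)).sub_const 1).mul (gx 2))).unique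
    ((hasDerivAt_const x (0 : ℝ)).congr_of_eventuallyEq (Eventually.of_forall fun s => T s y))
  have Ty := ((((gy 0).const_mul (2 * x)).add ((hy1.const_mul 2).mul (gy 1))).add
    (((hy2.const_add (x ^ 2)).sub_const 1).mul (gy 2))).unique
    ((hasDerivAt_const y (0 : ℝ)).congr_of_eventuallyEq (Eventually.of_forall fun s => T x s))
  have Px : HasDerivAt (fun s => compP V s y) _ x :=
    ((((hx2.const_add 1).add_const (y ^ 2)).div_const 2).mul ((gx 0).add (hx1.mul (gx 2))))
  have Qx : HasDerivAt (fun s => compQ V s y) _ x :=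
    ((((hx2.const_add 1).add_const (y ^ 2)).div_const 2).mul ((gx 1).add ((gx 2).const_mul y)))
  have Py : HasDerivAt (fun s => compP V x s) _ y :=
    (((hy2.const_add (1 + x ^ 2)).div_const 2).mul ((gy 0).add ((gy 2).const_mul x)))
  have Qy : HasDerivAt (fun s => compQ V x s) _ y :=
    (((hy2.const_add (1 + x ^ 2)).div_const 2).mul ((gy 1).add (hy1.mul (gy 2))))
  have lx : HasDerivAt (fun s : ℝ => (⟨s, y⟩ : ℂ)) 1 x := by
    have := (ofRealCLM.hasDerivAt (x := x)).add_const ((y : ℂ) * I)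
    refine (this.congr_of_eventuallyEq (Eventually.of_forall fun s => ?_)).congr_deriv (by simp)
    apply Complex.ext <;> simp
  have ly : HasDerivAt (fun s : ℝ => (⟨x, s⟩ : ℂ)) I y := by
    have := ((ofRealCLM.hasDerivAt (x := y)).mul_const I).const_add (x : ℂ)
    refine (this.congr_of_eventuallyEq (Eventually.of_forall fun s => ?_)).congr_deriv (by simp)
    apply Complex.ext <;> simp
  have Fx : HasDerivAt (fun s : ℝ => stereoField V ⟨s, y⟩) _ x :=
    HasFDerivAt.comp_hasDerivAt (f := fun s : ℝ => (⟨s, y⟩ : ℂ)) x hfz.hasFDerivAt lx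
  have Fy : HasDerivAt (fun s : ℝ => stereoField V ⟨x, s⟩) _ y :=
    HasFDerivAt.comp_hasDerivAt (f := fun s : ℝ => (⟨x, s⟩ : ℂ)) y hfz.hasFDerivAt ly
  rw [Fx.unique (Px.ofReal_comp.add (Qx.ofReal_comp.mul_const I)),
    Fy.unique (Py.ofReal_comp.add (Qy.ofReal_comp.mul_const I))]
  simp [Fin.sum_univ_three, stereoInvX, stereoInvY] at c1 c3 Tx Ty
  field_simp at c1 c3
  generalize V (stereoInv x y) = v at *
  apply Complex.ext
  · simp only [smul_eq_mul, add_re, mul_re, add_im, mul_im, ofReal_re, ofReal_im, I_re, I_im]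
    linear_combination c3 / 4 + y * Tx / 2 + x * Ty / 2
  · simp only [smul_eq_mul, add_re, mul_re, add_im, mul_im, ofReal_re, ofReal_im, I_re, I_im]
    linear_combination -c1 / 4 - x * Tx / 2 + y * Ty / 2

/-- The chart is conformal with factor `2 / (1 + |z|²)`, so a bound on `V` gives quadratic growth
of its chart expression. -/
lemma stereoField_bound (V : (Fin 3 → ℝ) → (Fin 3 → ℝ)) (hV : Continuous V)
    (htan : ∀ x : Fin 3 → ℝ, (∑ i, x i ^ 2) = 1 → (∑ i, V x i * x i) = 0) :
    ∃ M : ℝ, ∀ z, ‖stereoField V z‖ ≤ M * (1 + ‖z‖ ^ 2) := by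
  have hK : IsCompact {x : Fin 3 → ℝ | ∑ i, x i ^ 2 = 1} := by
    refine (isCompact_closedBall (0 : Fin 3 → ℝ) 1).of_isClosed_subset
      (isClosed_eq (by fun_prop) continuous_const) ?_
    intro x hx
    rw [mem_closedBall_zero_iff, pi_norm_le_iff_of_nonneg zero_le_one]
    intro i
    have h1 : x i ^ 2 ≤ ∑ j, x j ^ 2 :=
      Finset.single_le_sum (f := fun j => x j ^ 2) (fun j _ => sq_nonneg _) (Finset.mem_univ i)
    rw [show ∑ j, x j ^ 2 = 1 from hx] at h1
    exact (sq_le_one_iff_abs_le_one _).1 h1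
  obtain ⟨M, hM⟩ := hK.exists_bound_of_continuousOn
    (f := fun x => Real.sqrt (∑ i, V x i ^ 2)) (by fun_prop)
  refine ⟨M / 2, fun z => ?_⟩
  obtain ⟨x, y⟩ := z
  have hD : 0 < 1 + x ^ 2 + y ^ 2 := by positivity
  have hb := hM _ (stereoInv_mem x y)
  have h := htan _ (stereoInv_mem x y)
  rw [Real.norm_of_nonneg (Real.sqrt_nonneg _)] at hb
  have hz : ‖(⟨x, y⟩ : ℂ)‖ ^ 2 = x ^ 2 + y ^ 2 := by
    rw [← normSq_eq_norm_sq, normSq_mk]; ring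
  have key : ‖stereoField V ⟨x, y⟩‖
      = (1 + x ^ 2 + y ^ 2) / 2 * Real.sqrt (∑ i, V (stereoInv x y) i ^ 2) := by
    rw [← sq_eq_sq₀ (norm_nonneg _) (by positivity), mul_pow, Real.sq_sqrt (by positivity),
      ← normSq_eq_norm_sq, stereoField, normSq_add_mul_I]
    simp only [compP, compQ]
    generalize V (stereoInv x y) = v at *
    simp [Fin.sum_univ_three, stereoInv] at h ⊢
    field_simp at h ⊢
    linear_combination v 2 * h
  rw [key, hz]
  nlinarith

/-! ### Entire functions of quadratic growth -/

/-- Liouville's theorem for quadratic growth. -/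
lemma entire_quadratic (f : ℂ → ℂ) (hf : Differentiable ℂ f) (M : ℝ)
    (hM : ∀ z, ‖f z‖ ≤ M * (1 + ‖z‖ ^ 2)) :
    ∃ α β γ : ℂ, ∀ z, f z = α + β * z + γ * z ^ 2 := by
  have hM0 : 0 ≤ M := by simpa using (norm_nonneg _).trans (hM 0)
  have hz : ∀ n, 3 ≤ n → iteratedDeriv n f 0 = 0 := by
    intro n hn
    have hlim : Tendsto (fun R : ℝ => (n.factorial * (2 * M)) * R⁻¹) atTop (𝓝 0) := by
      simpa using tendsto_inv_atTop_zero.const_mul ((n.factorial : ℝ) * (2 * M))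
    refine norm_le_zero_iff.1 (ge_of_tendsto hlim ?_)
    filter_upwards [eventually_ge_atTop (1 : ℝ)] with R hR
    have hR0 : 0 < R := by linarith
    refine (norm_iteratedDeriv_le_of_forall_mem_sphere_norm_le n hR0 hf.diffContOnCl
      (C := 2 * M * R ^ 2) ?_).trans ?_
    · intro z hz
      rw [mem_sphere_zero_iff_norm] at hz
      have := hM z
      rw [hz] at this
      nlinarith [mul_nonneg hM0 (show 0 ≤ R ^ 2 - 1 by nlinarith)]
    · rw [div_le_iff₀ (by positivity)]
      have h3 : R ^ 3 ≤ R ^ n := pow_le_pow_right₀ hR hn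
      calc (n.factorial : ℝ) * (2 * M * R ^ 2) = n.factorial * (2 * M) * R⁻¹ * R ^ 3 := by
            field_simp
        _ ≤ _ := by gcongr
  refine ⟨iteratedDeriv 0 f 0, iteratedDeriv 1 f 0, iteratedDeriv 2 f 0 / 2, fun z => ?_⟩
  rw [← taylorSeries_eq_of_entire' 0 z hf, tsum_eq_sum (s := Finset.range 3)]
  · simp only [Finset.sum_range_succ, Finset.sum_range_zero, Nat.factorial, sub_zero]
    push_cast
    ring
  · intro n hn
    rw [hz n (by simpa using hn)]
    simp

/-! ### Return to the sphere -/

/-- Every point of the sphere but the north pole is in the image of `stereoInv`. -/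
lemma exists_stereoInv (X : Fin 3 → ℝ) (hX : ∑ i, X i ^ 2 = 1) (h2 : X 2 ≠ 1) :
    ∃ x y, X = stereoInv x y := by
  have h : 1 - X 2 ≠ 0 := sub_ne_zero.2 h2.symm
  rw [Fin.sum_univ_three] at hX
  have hD : 1 + (X 0 / (1 - X 2)) ^ 2 + (X 1 / (1 - X 2)) ^ 2 = 2 / (1 - X 2) := by
    field_simp
    linear_combination hX
  have hN : (X 0 / (1 - X 2)) ^ 2 + (X 1 / (1 - X 2)) ^ 2 - 1 = 2 / (1 - X 2) - 2 := by
    linear_combination hD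
  refine ⟨X 0 / (1 - X 2), X 1 / (1 - X 2), ?_⟩
  rw [stereoInv, hD, hN]
  funext i
  fin_cases i
  · simp; field_simp
  · simp; field_simp
  · simp; field_simp; ring

/-- The field with chart expression `α + β z + γ z²`, away from the north pole. -/
lemma eq_of_quadratic (V : (Fin 3 → ℝ) → (Fin 3 → ℝ))
    (htan : ∀ x : Fin 3 → ℝ, (∑ i, x i ^ 2) = 1 → (∑ i, V x i * x i) = 0)
    (α β γ : ℂ) (hf : ∀ z, stereoField V z = α + β * z + γ * z ^ 2) (X : Fin 3 → ℝ)
    (hX : ∑ i, X i ^ 2 = 1) (h2 : X 2 ≠ 1) :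
    V X = crossProduct ![α.im - γ.im, -α.re - γ.re, β.im] X
      + ![α.re - γ.re, α.im + γ.im, β.re]
      - (∑ i, ![α.re - γ.re, α.im + γ.im, β.re] i * X i) • X := by
  obtain ⟨x, y, rfl⟩ := exists_stereoInv X hX h2
  have h := htan _ hX
  set z' : ℂ := ⟨x, y⟩
  have hz := hf z'
  obtain ⟨p, hp⟩ : ∃ p, p = α.re + (β.re * x - β.im * y)
      + (γ.re * (x * x - y * y) - γ.im * (x * y + y * x)) := ⟨_, rfl⟩
  obtain ⟨q, hq⟩ : ∃ q, q = α.im + (β.re * y + β.im * x)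
      + (γ.re * (x * y + y * x) + γ.im * (x * x - y * y)) := ⟨_, rfl⟩
  have hre : (1 + x ^ 2 + y ^ 2) / 2 * (V (stereoInv x y) 0 + x * V (stereoInv x y) 2) = p := by
    have := congrArg re hz
    rw [stereoField_re, pow_two z'] at this
    simpa [compP, z', hp] using this
  have him : (1 + x ^ 2 + y ^ 2) / 2 * (V (stereoInv x y) 1 + y * V (stereoInv x y) 2) = q := by
    have := congrArg im hz
    rw [stereoField_im, pow_two z'] at this
    simpa [compQ, z', hq] using this
  have hD := denom_ne x y
  generalize V (stereoInv x y) = v at *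
  have T : 2 * x * v 0 + 2 * y * v 1 + (x ^ 2 + y ^ 2 - 1) * v 2 = 0 := by
    simp [Fin.sum_univ_three, stereoInv] at h
    field_simp at h
    linear_combination h
  -- inverting the chart: `v` is determined by its two chart components and tangency
  have e2 : v 2 = 4 * (x * p + y * q) / (1 + x ^ 2 + y ^ 2) ^ 2 := by
    rw [eq_div_iff (pow_ne_zero 2 hD)]
    linear_combination 4 * x * hre + 4 * y * him - (1 + x ^ 2 + y ^ 2) * T
  have e0 : v 0 = 2 * p / (1 + x ^ 2 + y ^ 2) - x * v 2 := by
    field_simp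
    linear_combination 2 * hre
  have e1 : v 1 = 2 * q / (1 + x ^ 2 + y ^ 2) - y * v 2 := by
    field_simp
    linear_combination 2 * him
  rw [e2] at e0 e1
  funext i
  fin_cases i
  · simp [e0, Fin.sum_univ_three, stereoInv, crossProduct, hp, hq]
    field_simp
    ring
  · simp [e1, Fin.sum_univ_three, stereoInv, crossProduct, hp, hq]
    field_simp
    ring
  · simp [e2, Fin.sum_univ_three, stereoInv, crossProduct, hp, hq]
    field_simp
    ring

end ConformalKilling

open ConformalKilling in
/-- Classification of conformal Killing vector fields on the round
unit sphere `S² ⊂ ℝ³`: any tangent field whose symmetrized tangential derivative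
is proportional to the metric is of the form `x ↦ a × x + c − ⟨c,x⟩x`. -/
theorem conformal_killing_classification
    (V : (Fin 3 → ℝ) → (Fin 3 → ℝ)) (hV : ContDiff ℝ (⊤ : ℕ∞) V)
    (htan : ∀ x : Fin 3 → ℝ, (∑ i, x i ^ 2) = 1 → (∑ i, V x i * x i) = 0)
    (μ : (Fin 3 → ℝ) → ℝ)
    (hconf : ∀ x : Fin 3 → ℝ, (∑ i, x i ^ 2) = 1 →
      ∀ u w : Fin 3 → ℝ, (∑ i, x i * u i) = 0 → (∑ i, x i * w i) = 0 →
        (∑ i, (fderiv ℝ V x u) i * w i) + (∑ i, (fderiv ℝ V x w) i * u i)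
          = 2 * μ x * (∑ i, u i * w i)) :
    ∃ a c : Fin 3 → ℝ, ∀ x : Fin 3 → ℝ, (∑ i, x i ^ 2) = 1 →
      V x = crossProduct a x + c - (∑ i, c i * x i) • x := by
  have hd : Differentiable ℝ V := hV.differentiable (by simp)
  have hc : Continuous V := hV.continuous
  obtain ⟨M, hM⟩ := stereoField_bound V hc htan
  obtain ⟨α, β, γ, hf⟩ := entire_quadratic _ (stereoField_differentiable V hd htan μ hconf) M hM
  refine ⟨![α.im - γ.im, -α.re - γ.re, β.im], ![α.re - γ.re, α.im + γ.im, β.re], fun X hX => ?_⟩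
  by_cases h2 : X 2 ≠ 1
  · exact eq_of_quadratic V htan α β γ hf X hX h2
  push Not at h2
  have hX0 : X = ![0, 0, 1] := by
    rw [Fin.sum_univ_three, h2] at hX
    have h0 : X 0 = 0 := by nlinarith [sq_nonneg (X 0), sq_nonneg (X 1)]
    have h1 : X 1 = 0 := by nlinarith [sq_nonneg (X 0), sq_nonneg (X 1)]
    funext i
    fin_cases i <;> simp [h0, h1, h2]
  -- approach the north pole along the meridian `(sin t, 0, cos t)`
  set G : (Fin 3 → ℝ) → (Fin 3 → ℝ) := fun x =>
    crossProduct ![α.im - γ.im, -α.re - γ.re, β.im] x + ![α.re - γ.re, α.im + γ.im, β.re]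
      - (∑ i, ![α.re - γ.re, α.im + γ.im, β.re] i * x i) • x with hG
  have hGc : Continuous G := by
    have : Continuous fun x : Fin 3 → ℝ => crossProduct ![α.im - γ.im, -α.re - γ.re, β.im] x :=
      LinearMap.continuous_of_finiteDimensional _
    fun_prop
  set m : ℝ → (Fin 3 → ℝ) := fun t => ![Real.sin t, 0, Real.cos t] with hm
  have hmc : Continuous m := by
    rw [continuous_pi_iff]
    intro i
    fin_cases i <;> simp [hm] <;> fun_prop
  have hev : (fun t => V (m t)) =ᶠ[𝓝[≠] 0] fun t => G (m t) := by
    have hn : Set.Ioo (-1 : ℝ) 1 ∈ 𝓝 (0 : ℝ) := Ioo_mem_nhds (by norm_num) (by norm_num)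
    filter_upwards [self_mem_nhdsWithin, mem_nhdsWithin_of_mem_nhds hn] with t ht0 ht
    apply eq_of_quadratic V htan α β γ hf
    · simp [hm, Fin.sum_univ_three]
    · intro h
      have hc1 : Real.cos t = 1 := by simpa [hm] using h
      exact ht0 ((Real.cos_eq_one_iff_of_lt_of_lt (by linarith [ht.1, Real.pi_gt_three])
        (by linarith [ht.2, Real.pi_gt_three])).1 hc1)
  have h1 : Tendsto (fun t => V (m t)) (𝓝[≠] 0) (𝓝 (V (m 0))) :=
    ((hc.comp hmc).tendsto 0).mono_left nhdsWithin_le_nhds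
  have h2 : Tendsto (fun t => G (m t)) (𝓝[≠] 0) (𝓝 (G (m 0))) :=
    ((hGc.comp hmc).tendsto 0).mono_left nhdsWithin_le_nhds
  have h3 := tendsto_nhds_unique (h1.congr' hev) h2
  have hm0 : m 0 = X := by simp [hm, hX0]
  rw [hm0] at h3
  exact h3
end

section
/- Let σ ∈ {−1,1}, and let m, κ, σ_c, σ'_c be real constants with σ_c ≠ 0 and σ'_c ≠ 0. Let I ⊂ ℝ be an open interval and a : I → ℝ differentiable with a(λ) ≠ 0 for all λ ∈ I; let J ⊂ ℝ be open with σ_c·a(λ) ∈ J for all λ, and 𝒢 : J → ℝ differentiable. Suppose X, Y, Z : I → ℝ satisfy, for all λ ∈ I: X(λ) = −σ·σ'_c·𝒢(σ_c a(λ))/a(λ), Z(λ) = −σ·𝒢(σ_c a(λ))·ȧ(λ)·σ_c/a(λ)², and Y(λ) = σ·𝒢(σ_c a(λ))·(σ_c³ a(λ)κ − 3m)/(σ_c² a(λ)²) + σ·𝒢'(σ_c a(λ))·(σ_c²κ − 1). Then: (i) Z(λ) = (ȧ(λ)σ_c/(a(λ)σ'_c))·X(λ) for all λ ∈ I; and (ii)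 X is differentiable, and at every λ ∈ I with ȧ(λ) ≠ 0, −σ'_c·Y(λ) = X(λ)·(σ_c³ a(λ)κ − 3m)/(σ_c² a(λ)) + (ȧ(λ)X(λ) + a(λ)Ẋ(λ))·(σ_c²κ − 1)/(σ_c ȧ(λ)). -/
/-!
The function `a * X` equals `-σ σc' G(σc a)`, so by the chain rule its derivative is
`-σ σc' σc a' G'(σc a)`. Where `a' ≠ 0` this expresses `G'(σc a)` through `a' X + a X'`, and the
formula for `X` expresses `G(σc a)`; substituting both into the formulas for `Z` and `Y` gives
the two constraints.
-/

/-- Elimination of the interior twist potential `𝒢` from the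
odd-sector linearized matching conditions yields the two constraints on the
FLRW perturbation combinations `X`, `Y`, `Z` on the matching hypersurface. -/
theorem odd_sector_constraints
    (σ m σc σc' κ p q : ℝ)
    (hσ : σ = -1 ∨ σ = 1)
    (hσc : σc ≠ 0) (hσc' : σc' ≠ 0)
    (a a' : ℝ → ℝ)
    (hderiva : ∀ l ∈ Set.Ioo p q, HasDerivAt a (a' l) l)
    (hane : ∀ l ∈ Set.Ioo p q, a l ≠ 0)
    (J : Set ℝ) (hJopen : IsOpen J)
    (hJmem : ∀ l ∈ Set.Ioo p q, σc * a l ∈ J)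
    (G : ℝ → ℝ) (hG : DifferentiableOn ℝ G J)
    (X Y Z : ℝ → ℝ)
    (hX : ∀ l ∈ Set.Ioo p q, X l = -σ * σc' * G (σc * a l) / a l)
    (hZ : ∀ l ∈ Set.Ioo p q, Z l = -σ * G (σc * a l) * a' l * σc / (a l) ^ 2)
    (hY : ∀ l ∈ Set.Ioo p q,
      Y l = σ * G (σc * a l) * (σc ^ 3 * a l * κ - 3 * m) / (σc ^ 2 * (a l) ^ 2)
        + σ * deriv G (σc * a l) * (σc ^ 2 * κ - 1)) :
    (∀ l ∈ Set.Ioo p q, Z l = (a' l * σc / (a l * σc')) * X l)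
    ∧ (∀ l ∈ Set.Ioo p q, DifferentiableAt ℝ X l)
    ∧ (∀ l ∈ Set.Ioo p q, a' l ≠ 0 →
        -σc' * Y l = X l * (σc ^ 3 * a l * κ - 3 * m) / (σc ^ 2 * a l)
          + (a' l * X l + a l * deriv X l) * (σc ^ 2 * κ - 1) / (σc * a' l)) := by
  have key : ∀ l ∈ Set.Ioo p q, HasDerivAt X
      ((-σ * σc' * (deriv G (σc * a l) * (σc * a' l)) * a l
        - -σ * σc' * G (σc * a l) * a' l) / (a l) ^ 2) l := by
    intro l hl
    have hGd : HasDerivAt G (deriv G (σc * a l)) (σc * a l) :=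
      (hG.differentiableAt (hJopen.mem_nhds (hJmem l hl))).hasDerivAt
    have hcomp : HasDerivAt (fun t => G (σc * a t)) (deriv G (σc * a l) * (σc * a' l)) l :=
      hGd.comp l ((hderiva l hl).const_mul σc)
    refine ((hcomp.const_mul (-σ * σc')).div (hderiva l hl) (hane l hl)).congr_of_eventuallyEq ?_
    -- the formula for `X` holds only on the interval, which is a neighbourhood of `l`
    filter_upwards [isOpen_Ioo.mem_nhds hl] with t ht
    simpa using hX t ht
  refine ⟨fun l hl => ?_, fun l hl => (key l hl).differentiableAt, fun l hl ha' => ?_⟩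
  · have ha := hane l hl
    rw [hZ l hl, hX l hl]
    field_simp
  · have ha := hane l hl
    rw [(key l hl).deriv, hX l hl, hY l hl]
    field_simp
    ring
end
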